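/- Let n ≥ 1, let γ ∈ ℝ, and let φ : ℝⁿ → ℝ be of class C⁴. Define the operators, acting on smooth functions f : ℝⁿ → ℂ, by S f = −iγ(2∇φ·∇f + (Δφ)f) and A f = i(Δf + γ²|∇φ|²f). Then for every f : ℝⁿ → ℂ of class C³ and every x ∈ ℝⁿ, (S(Af) − A(Sf))(x) = −γ [ 4 ∑_{j,k=1}^n ∂_j( ∂_j∂_kφ(x) ∂_k f(x) ) − 4γ² ( ∑_{j,k=1}^n ∂_j∂_kφ(x) ∂_jφ(x) ∂_kφ(x) ) f(x) + (Δ²φ)(x) f(x) ], i.e. [S,A] = −γ[ 4∇·(D²φ ∇·) − 4γ² D²φ∇φ·∇φ + Δ²φ ]. -/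

import Mathlib

/-!
Write `u` for `φ` viewed as a complex-valued function, `L g = 2∇u·∇g + (Δu)g` and
`V = γ²|∇u|²`. Since `S = -iγL` and `A = i(Δ + V)`, one has `[S,A] = γ([L,Δ] + [L,V])`.

* `[L,V]` is multiplication by `2∇u·∇V = 4γ² D²u∇u·∇u`, by the Leibniz rule.
* The product rule for the Laplacian (`lapC_mul`) and the commutation of `Δ` with each `∂ⱼ`
  (`pderivC_lapC`) give `-[L,Δ]g = 4 D²u:D²g + 4∇(Δu)·∇g + (Δ²u)g`, and the first two terms
  add up to `4∇·(D²u∇g)`.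

The regularity is just enough: `Sf` is `C²` and `Af` is `C¹`, so each derivative taken exists.
-/

open MeasureTheory Complex Filter Set
open scoped ENNReal

/-- Partial derivative in the `j`-th coordinate direction of a complex-valued function. -/
noncomputable def pderivC {n : ℕ} (j : Fin n) (f : EuclideanSpace ℝ (Fin n) → ℂ)
    (x : EuclideanSpace ℝ (Fin n)) : ℂ :=
  fderiv ℝ f x (EuclideanSpace.single j 1)

/-- Partial derivative in the `j`-th coordinate direction of a real-valued function. -/
noncomputable def pderivR {n : ℕ} (j : Fin n) (f : EuclideanSpace ℝ (Fin n) → ℝ)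
    (x : EuclideanSpace ℝ (Fin n)) : ℝ :=
  fderiv ℝ f x (EuclideanSpace.single j 1)

/-- The Laplacian of a complex-valued function as a sum of repeated partial derivatives. -/
noncomputable def lapC {n : ℕ} (f : EuclideanSpace ℝ (Fin n) → ℂ)
    (x : EuclideanSpace ℝ (Fin n)) : ℂ :=
  ∑ j : Fin n, pderivC j (fun y => pderivC j f y) x

/-- The Laplacian of a real-valued function as a sum of repeated partial derivatives. -/
noncomputable def lapR {n : ℕ} (f : EuclideanSpace ℝ (Fin n) → ℝ)
    (x : EuclideanSpace ℝ (Fin n)) : ℝ :=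
  ∑ j : Fin n, pderivR j (fun y => pderivR j f y) x

/-- The symmetric operator `S f = -iγ(2∇φ·∇f + (Δφ)f)`. -/
noncomputable def opS {n : ℕ} (γ : ℝ) (φ : EuclideanSpace ℝ (Fin n) → ℝ)
    (f : EuclideanSpace ℝ (Fin n) → ℂ) (x : EuclideanSpace ℝ (Fin n)) : ℂ :=
  -Complex.I * (γ : ℂ) *
    (2 * ∑ j : Fin n, ((pderivR j φ x : ℝ) : ℂ) * pderivC j f x + ((lapR φ x : ℝ) : ℂ) * f x)

/-- The skew-symmetric operator `A f = i(Δf + γ²|∇φ|²f)`. -/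
noncomputable def opA {n : ℕ} (γ : ℝ) (φ : EuclideanSpace ℝ (Fin n) → ℝ)
    (f : EuclideanSpace ℝ (Fin n) → ℂ) (x : EuclideanSpace ℝ (Fin n)) : ℂ :=
  Complex.I * (lapC f x + (γ : ℂ) ^ 2 * (((∑ j : Fin n, (pderivR j φ x) ^ 2 : ℝ)) : ℂ) * f x)

section Calculus

variable {n : ℕ}

lemma contDiff_pderivC {m k : WithTop ℕ∞} {g : EuclideanSpace ℝ (Fin n) → ℂ}
    (hg : ContDiff ℝ k g) (hmk : m + 1 ≤ k) (j : Fin n) : ContDiff ℝ m (pderivC j g) :=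
  (hg.fderiv_right hmk).clm_apply contDiff_const

lemma contDiff_lapC {m k : WithTop ℕ∞} {g : EuclideanSpace ℝ (Fin n) → ℂ}
    (hg : ContDiff ℝ k g) (hmk : m + 1 + 1 ≤ k) : ContDiff ℝ m (lapC g) :=
  ContDiff.sum fun j _ => contDiff_pderivC (contDiff_pderivC hg hmk j) le_rfl j

lemma pderivC_add {g h : EuclideanSpace ℝ (Fin n) → ℂ} (hg : ContDiff ℝ 1 g)
    (hh : ContDiff ℝ 1 h) (j : Fin n) :
    pderivC j (fun y => g y + h y) = fun y => pderivC j g y + pderivC j h y := by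
  funext x
  have h1 := (hg.differentiable one_ne_zero) x
  have h2 := (hh.differentiable one_ne_zero) x
  simp [pderivC, fderiv_fun_add h1 h2]

lemma pderivC_mul {g h : EuclideanSpace ℝ (Fin n) → ℂ} (hg : ContDiff ℝ 1 g)
    (hh : ContDiff ℝ 1 h) (j : Fin n) :
    pderivC j (fun y => g y * h y) = fun y => pderivC j g y * h y + g y * pderivC j h y := by
  funext x
  have h1 := (hg.differentiable one_ne_zero) x
  have h2 := (hh.differentiable one_ne_zero) x
  simp [pderivC, fderiv_fun_mul h1 h2]
  ring

lemma pderivC_const_mul {g : EuclideanSpace ℝ (Fin n) → ℂ} (hg : ContDiff ℝ 1 g) (c : ℂ)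
    (j : Fin n) : pderivC j (fun y => c * g y) = fun y => c * pderivC j g y := by
  rw [pderivC_mul contDiff_const hg]
  funext x
  simp [pderivC]

lemma pderivC_sum {ι : Type*} (s : Finset ι) {g : ι → EuclideanSpace ℝ (Fin n) → ℂ}
    (hg : ∀ i, ContDiff ℝ 1 (g i)) (j : Fin n) :
    pderivC j (fun y => ∑ i ∈ s, g i y) = fun y => ∑ i ∈ s, pderivC j (g i) y := by
  funext x
  have h1 : ∀ i ∈ s, DifferentiableAt ℝ (g i) x :=
    fun i _ => ((hg i).differentiable one_ne_zero) x
  simp [pderivC, fderiv_fun_sum h1]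

/-- Schwarz's theorem for the coordinate derivatives. -/
lemma pderivC_comm {g : EuclideanSpace ℝ (Fin n) → ℂ} (hg : ContDiff ℝ 2 g) (j k : Fin n) :
    pderivC j (pderivC k g) = pderivC k (pderivC j g) := by
  funext x
  have hd : DifferentiableAt ℝ (fderiv ℝ g) x :=
    ((hg.fderiv_right (m := 1) (by norm_num)).differentiable one_ne_zero) x
  have key : ∀ a b : Fin n, pderivC a (pderivC b g) x =
      fderiv ℝ (fderiv ℝ g) x (EuclideanSpace.single a 1) (EuclideanSpace.single b 1) := by
    intro a b
    have : pderivC b g = fun y => fderiv ℝ g y (EuclideanSpace.single b 1) := rfl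
    rw [this, pderivC, fderiv_clm_apply hd (differentiableAt_const _)]
    simp
  rw [key, key]
  exact (hg.contDiffAt.isSymmSndFDerivAt (by simp)).eq _ _

lemma lapC_add {g h : EuclideanSpace ℝ (Fin n) → ℂ} (hg : ContDiff ℝ 2 g)
    (hh : ContDiff ℝ 2 h) (x : EuclideanSpace ℝ (Fin n)) :
    lapC (fun y => g y + h y) x = lapC g x + lapC h x := by
  have e : (1 : WithTop ℕ∞) + 1 ≤ 2 := by norm_num
  simp only [lapC, ← Finset.sum_add_distrib]
  refine Finset.sum_congr rfl fun j _ => ?_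
  rw [pderivC_add (hg.of_le (by norm_num)) (hh.of_le (by norm_num)),
    pderivC_add (contDiff_pderivC hg e j) (contDiff_pderivC hh e j)]

lemma lapC_const_mul {g : EuclideanSpace ℝ (Fin n) → ℂ} (hg : ContDiff ℝ 2 g) (c : ℂ)
    (x : EuclideanSpace ℝ (Fin n)) : lapC (fun y => c * g y) x = c * lapC g x := by
  have e : (1 : WithTop ℕ∞) + 1 ≤ 2 := by norm_num
  simp only [lapC, Finset.mul_sum]
  refine Finset.sum_congr rfl fun j _ => ?_
  rw [pderivC_const_mul (hg.of_le (by norm_num)), pderivC_const_mul (contDiff_pderivC hg e j)]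

lemma lapC_sum {ι : Type*} (s : Finset ι) {g : ι → EuclideanSpace ℝ (Fin n) → ℂ}
    (hg : ∀ i, ContDiff ℝ 2 (g i)) (x : EuclideanSpace ℝ (Fin n)) :
    lapC (fun y => ∑ i ∈ s, g i y) x = ∑ i ∈ s, lapC (g i) x := by
  have e : (1 : WithTop ℕ∞) + 1 ≤ 2 := by norm_num
  simp only [lapC]
  rw [Finset.sum_comm]
  refine Finset.sum_congr rfl fun j _ => ?_
  rw [pderivC_sum s (fun i => (hg i).of_le (by norm_num)),
    pderivC_sum s (fun i => contDiff_pderivC (hg i) e j)]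

lemma lapC_mul {g h : EuclideanSpace ℝ (Fin n) → ℂ} (hg : ContDiff ℝ 2 g)
    (hh : ContDiff ℝ 2 h) (x : EuclideanSpace ℝ (Fin n)) :
    lapC (fun y => g y * h y) x =
      lapC g x * h x + 2 * ∑ j : Fin n, pderivC j g x * pderivC j h x + g x * lapC h x := by
  have e : (1 : WithTop ℕ∞) + 1 ≤ 2 := by norm_num
  have hg1 : ContDiff ℝ 1 g := hg.of_le (by norm_num)
  have hh1 : ContDiff ℝ 1 h := hh.of_le (by norm_num)
  simp only [lapC, Finset.mul_sum, Finset.sum_mul, ← Finset.sum_add_distrib]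
  refine Finset.sum_congr rfl fun j _ => ?_
  have hgj := contDiff_pderivC hg e j
  have hhj := contDiff_pderivC hh e j
  rw [pderivC_mul hg1 hh1, pderivC_add (hgj.mul hh1) (hg1.mul hhj),
    pderivC_mul hgj hh1, pderivC_mul hg1 hhj]
  ring

lemma pderivC_lapC {g : EuclideanSpace ℝ (Fin n) → ℂ} (hg : ContDiff ℝ 3 g) (k : Fin n) :
    pderivC k (lapC g) = lapC (pderivC k g) := by
  have e : (2 : WithTop ℕ∞) + 1 ≤ 3 := by norm_num
  have e' : (1 : WithTop ℕ∞) + 1 ≤ 2 := by norm_num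
  have h2 := fun j => contDiff_pderivC hg e j
  have : lapC g = fun y => ∑ j : Fin n, pderivC j (pderivC j g) y := rfl
  rw [this, pderivC_sum _ (fun j => contDiff_pderivC (h2 j) e' j)]
  funext x
  refine Finset.sum_congr rfl fun j _ => ?_
  rw [pderivC_comm (h2 j) k j, pderivC_comm (hg.of_le (by norm_num)) k j]

lemma ofReal_pderivR {g : EuclideanSpace ℝ (Fin n) → ℝ} (hg : ContDiff ℝ 1 g) (j : Fin n)
    (x : EuclideanSpace ℝ (Fin n)) :
    ((pderivR j g x : ℝ) : ℂ) = pderivC j (fun y => ((g y : ℝ) : ℂ)) x := by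
  have h1 := ((hg.differentiable one_ne_zero) x).hasFDerivAt
  have h2 := (Complex.ofRealCLM.hasFDerivAt (x := g x)).comp x h1
  have h3 : fderiv ℝ (fun y => ((g y : ℝ) : ℂ)) x = Complex.ofRealCLM.comp (fderiv ℝ g x) :=
    h2.fderiv
  simp [pderivC, pderivR, h3]

lemma contDiff_pderivR {m k : WithTop ℕ∞} {g : EuclideanSpace ℝ (Fin n) → ℝ}
    (hg : ContDiff ℝ k g) (hmk : m + 1 ≤ k) (j : Fin n) : ContDiff ℝ m (pderivR j g) :=
  (hg.fderiv_right hmk).clm_apply contDiff_const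

lemma ofReal_pderivR_pderivR {g : EuclideanSpace ℝ (Fin n) → ℝ} (hg : ContDiff ℝ 2 g)
    (j k : Fin n) (x : EuclideanSpace ℝ (Fin n)) :
    ((pderivR j (fun y => pderivR k g y) x : ℝ) : ℂ) =
      pderivC j (pderivC k (fun y => ((g y : ℝ) : ℂ))) x := by
  rw [ofReal_pderivR (contDiff_pderivR hg (by norm_num) k)]
  congr 1
  funext y
  exact ofReal_pderivR (hg.of_le (by norm_num)) k y

lemma ofReal_lapR {g : EuclideanSpace ℝ (Fin n) → ℝ} (hg : ContDiff ℝ 2 g)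
    (x : EuclideanSpace ℝ (Fin n)) :
    ((lapR g x : ℝ) : ℂ) = lapC (fun y => ((g y : ℝ) : ℂ)) x := by
  simp only [lapR, lapC, Complex.ofReal_sum]
  exact Finset.sum_congr rfl fun j _ => ofReal_pderivR_pderivR hg j j x

lemma contDiff_lapR {m k : WithTop ℕ∞} {g : EuclideanSpace ℝ (Fin n) → ℝ}
    (hg : ContDiff ℝ k g) (hmk : m + 1 + 1 ≤ k) : ContDiff ℝ m (lapR g) :=
  ContDiff.sum fun j _ => contDiff_pderivR (contDiff_pderivR hg hmk j) le_rfl j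

end Calculus

/-- The commutator identity
`[S,A] = -γ[4∇·(D²φ∇·) - 4γ²D²φ∇φ·∇φ + Δ²φ]` for the operators
`S = -iγ(2∇φ·∇ + Δφ)` and `A = i(Δ + γ²|∇φ|²)`. -/
theorem commutator_S_A
    (n : ℕ) (hn : 1 ≤ n) (γ : ℝ) (φ : EuclideanSpace ℝ (Fin n) → ℝ)
    (hφ : ContDiff ℝ 4 φ)
    (f : EuclideanSpace ℝ (Fin n) → ℂ) (hf : ContDiff ℝ 3 f) :
    ∀ x : EuclideanSpace ℝ (Fin n),
      opS γ φ (opA γ φ f) x - opA γ φ (opS γ φ f) x =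
        -(γ : ℂ) *
          (4 * ∑ j : Fin n, pderivC j
              (fun y => ∑ k : Fin n,
                ((pderivR j (fun z => pderivR k φ z) y : ℝ) : ℂ) * pderivC k f y) x
            - 4 * (γ : ℂ) ^ 2 *
              (((∑ j : Fin n, ∑ k : Fin n,
                  pderivR j (fun z => pderivR k φ z) x * pderivR j φ x * pderivR k φ x : ℝ)) : ℂ)
                * f x
            + ((lapR (fun y => lapR φ y) x : ℝ) : ℂ) * f x) := by
  intro x
  obtain ⟨u, hu_def⟩ : ∃ u : EuclideanSpace ℝ (Fin n) → ℂ, u = fun y => ((φ y : ℝ) : ℂ) :=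
    ⟨_, rfl⟩
  have hu : ContDiff ℝ 4 u := by
    rw [hu_def]; exact Complex.ofRealCLM.contDiff.comp hφ
  have hφ2 : ContDiff ℝ 2 φ := hφ.of_le (by norm_num)
  have e1 : ∀ j y, ((pderivR j φ y : ℝ) : ℂ) = pderivC j u y := fun j y => by
    rw [hu_def]; exact ofReal_pderivR (hφ.of_le (by norm_num)) j y
  have e2 : ∀ j k y, ((pderivR j (fun z => pderivR k φ z) y : ℝ) : ℂ) =
      pderivC j (pderivC k u) y := fun j k y => by
    rw [hu_def]; exact ofReal_pderivR_pderivR hφ2 j k y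
  have e3 : ∀ y, ((lapR φ y : ℝ) : ℂ) = lapC u y := fun y => by
    rw [hu_def]; exact ofReal_lapR hφ2 y
  have e4 : ((lapR (fun y => lapR φ y) x : ℝ) : ℂ) = lapC (lapC u) x := by
    rw [ofReal_lapR (contDiff_lapR hφ (by norm_num))]
    congr 1
    funext y
    exact e3 y
  have hS : ∀ g, opS γ φ g = fun y => (-Complex.I * (γ : ℂ)) *
      (2 * ∑ j : Fin n, pderivC j u y * pderivC j g y + lapC u y * g y) := fun g => by
    funext y
    simp only [opS, e1, e3]
  have hA : ∀ g, opA γ φ g = fun y => Complex.I *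
      (lapC g y + (γ : ℂ) ^ 2 * ((∑ j : Fin n, pderivC j u y * pderivC j u y) * g y)) :=
    fun g => by
      funext y
      simp only [opA, Complex.ofReal_sum, Complex.ofReal_mul, e1, pow_two, mul_assoc]
  have hp3 : ∀ j, ContDiff ℝ 3 (pderivC j u) := fun j => contDiff_pderivC hu (by norm_num) j
  have hp2 : ∀ j, ContDiff ℝ 2 (pderivC j u) := fun j => (hp3 j).of_le (by norm_num)
  have hp1 : ∀ j, ContDiff ℝ 1 (pderivC j u) := fun j => (hp3 j).of_le (by norm_num)
  have hlu : ContDiff ℝ 2 (lapC u) := contDiff_lapC hu (by norm_num)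
  have hf2 : ContDiff ℝ 2 f := hf.of_le (by norm_num)
  have hf1 : ContDiff ℝ 1 f := hf.of_le (by norm_num)
  have hfj : ∀ j, ContDiff ℝ 2 (pderivC j f) := fun j => contDiff_pderivC hf (by norm_num) j
  have hfj1 : ∀ j, ContDiff ℝ 1 (pderivC j f) := fun j => (hfj j).of_le (by norm_num)
  have hlf : ContDiff ℝ 1 (lapC f) := contDiff_lapC hf (by norm_num)
  have hW : ContDiff ℝ 1 (fun y => ∑ j : Fin n, pderivC j u y * pderivC j u y) :=
    ContDiff.sum fun j _ => (hp1 j).mul (hp1 j)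
  have hG : ContDiff ℝ 2 (fun y => ∑ j : Fin n, pderivC j u y * pderivC j f y) :=
    ContDiff.sum fun j _ => (hp2 j).mul (hfj j)
  have hDW : ∀ j, pderivC j (fun y => ∑ k : Fin n, pderivC k u y * pderivC k u y) x =
      2 * ∑ k : Fin n, pderivC j (pderivC k u) x * pderivC k u x := fun j => by
    rw [pderivC_sum _ (fun k => (hp1 k).mul (hp1 k)), Finset.mul_sum]
    refine Finset.sum_congr rfl fun k _ => ?_
    rw [pderivC_mul (hp1 k) (hp1 k)]
    ring
  have hDA : ∀ j, pderivC j (opA γ φ f) x = Complex.I * (lapC (pderivC j f) x + (γ : ℂ) ^ 2 *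
      ((2 * ∑ k : Fin n, pderivC j (pderivC k u) x * pderivC k u x) * f x +
        (∑ k : Fin n, pderivC k u x * pderivC k u x) * pderivC j f x)) := fun j => by
    rw [hA, pderivC_const_mul (hlf.add (contDiff_const.mul (hW.mul hf1))),
      pderivC_add hlf (contDiff_const.mul (hW.mul hf1)), pderivC_const_mul (hW.mul hf1),
      pderivC_mul hW hf1, pderivC_lapC hf, ← hDW]
  have hLS : lapC (opS γ φ f) x = (-Complex.I * (γ : ℂ)) *
      (2 * (∑ j : Fin n, lapC (pderivC j u) x * pderivC j f x
          + 2 * ∑ j : Fin n, ∑ k : Fin n,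
              pderivC j (pderivC k u) x * pderivC j (pderivC k f) x
          + ∑ j : Fin n, pderivC j u x * lapC (pderivC j f) x)
        + (lapC (lapC u) x * f x + 2 * ∑ j : Fin n, lapC (pderivC j u) x * pderivC j f x
          + lapC u x * lapC f x)) := by
    rw [hS, lapC_const_mul ((contDiff_const.mul hG).add (hlu.mul hf2)),
      lapC_add (contDiff_const.mul hG) (hlu.mul hf2), lapC_const_mul hG, lapC_mul hlu hf2,
      lapC_sum _ (fun j => (hp2 j).mul (hfj j))]
    simp only [pderivC_lapC (hu.of_le (by norm_num : (3 : WithTop ℕ∞) ≤ 4)),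
      lapC_mul (hp2 _) (hfj _), Finset.sum_add_distrib]
    rw [← Finset.mul_sum, Finset.sum_comm]
  -- `∇·(D²u∇f) = ∇(Δu)·∇f + D²u:D²f`
  have hdiv : ∑ j : Fin n, pderivC j
        (fun y => ∑ k : Fin n, pderivC j (pderivC k u) y * pderivC k f y) x =
      ∑ j : Fin n, lapC (pderivC j u) x * pderivC j f x
        + ∑ j : Fin n, ∑ k : Fin n,
            pderivC j (pderivC k u) x * pderivC j (pderivC k f) x := by
    have hpp : ∀ j k, ContDiff ℝ 1 (pderivC j (pderivC k u)) :=
      fun j k => contDiff_pderivC (hp2 k) (by norm_num) j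
    have h1 : ∀ j : Fin n, pderivC j
        (fun y => ∑ k : Fin n, pderivC j (pderivC k u) y * pderivC k f y) x =
        ∑ k : Fin n, pderivC j (pderivC j (pderivC k u)) x * pderivC k f x
          + ∑ k : Fin n, pderivC j (pderivC k u) x * pderivC j (pderivC k f) x := fun j => by
      rw [pderivC_sum _ (fun k => (hpp j k).mul (hfj1 k)), ← Finset.sum_add_distrib]
      refine Finset.sum_congr rfl fun k _ => ?_
      rw [pderivC_mul (hpp j k) (hfj1 k)]
    simp only [h1, Finset.sum_add_distrib]
    congr 1
    rw [Finset.sum_comm]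
    simp only [lapC, Finset.sum_mul]
  have hgrad : ∑ j : Fin n, pderivC j u x * pderivC j (opA γ φ f) x =
      Complex.I * (∑ j : Fin n, pderivC j u x * lapC (pderivC j f) x + (γ : ℂ) ^ 2 *
        (2 * (∑ j : Fin n, ∑ k : Fin n,
            pderivC j (pderivC k u) x * pderivC j u x * pderivC k u x) * f x +
          (∑ k : Fin n, pderivC k u x * pderivC k u x) *
            ∑ j : Fin n, pderivC j u x * pderivC j f x)) := by
    generalize hWx : (∑ k : Fin n, pderivC k u x * pderivC k u x) = W at hDA ⊢
    simp only [hDA, Finset.mul_sum, Finset.sum_mul, ← Finset.sum_add_distrib, mul_add]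
    refine Finset.sum_congr rfl fun j _ => ?_
    congr 1
    · ring
    · congr 1
      · refine Finset.sum_congr rfl fun k _ => ?_
        ring
      · ring
  have hSA : opS γ φ (opA γ φ f) x = (-Complex.I * (γ : ℂ)) *
      (2 * ∑ j : Fin n, pderivC j u x * pderivC j (opA γ φ f) x
        + lapC u x * opA γ φ f x) := congrFun (hS _) x
  have hAS : opA γ φ (opS γ φ f) x = Complex.I * (lapC (opS γ φ f) x + (γ : ℂ) ^ 2 *
      ((∑ j : Fin n, pderivC j u x * pderivC j u x) * opS γ φ f x)) := congrFun (hA _) x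
  rw [hSA, hAS, hgrad, hLS, congrFun (hS f) x, congrFun (hA f) x]
  simp only [Complex.ofReal_sum, Complex.ofReal_mul, e1, e2, e4, hdiv]
  ring_nf
  simp only [Complex.I_sq]
  ring
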